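/- Let ψ ∈ [0,1]^V be a normalized B-harmonic vector. Then there are a unique collection 𝒞 of B-harmonic components of B and unique positive numbers t_C ∈ (0,1] for C ∈ 𝒞 such that ψ = Σ_{C∈𝒞} t_C φ^C. -/

import Mathlib

open Filter Finset

/-- The spectral radius of a real matrix, `ρ(M) = lim_n ‖Mⁿ‖^{1/n}`
(computed with the entrywise ℓ¹-norm, and as a `limsup` so that it is always defined;
it is `0` for the matrix over the empty index type). -/
noncomputable def specRad {n : Type*} [Fintype n] [DecidableEq n] (M : Matrix n n ℝ) : ℝ :=
  Filter.limsup (fun k : ℕ => (∑ i, ∑ j, |(M ^ k) i j|) ^ ((1 : ℝ) / (k : ℝ))) Filter.atTop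

/-- The spectral radius `ρ(B^S)` of the submatrix of `B` obtained by restricting to `S × S`. -/
noncomputable def specRadOn {V : Type*} [Fintype V] (B : Matrix V V ℝ) (S : Set V) : ℝ :=
  letI : Fintype S := (Set.toFinite S).fintype
  letI : DecidableEq S := Classical.decEq _
  specRad (fun i j : S => B i.1 j.1)

variable {V : Type*} [Fintype V]

/-- A vertex `s` is a sink for `B` when the row of `B` at `s` vanishes. -/
def IsSink (B : Matrix V V ℝ) (s : V) : Prop := ∀ w, B s w = 0

/-- `ψ` is `B`-harmonic: `Σ_w B v w * ψ w = ψ v` for all `v`. -/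
def IsHarmonic (B : Matrix V V ℝ) (ψ : V → ℝ) : Prop :=
  ∀ v, ∑ w, B v w * ψ w = ψ v

/-- `ψ` is almost `B`-harmonic: `Σ_w B v w * ψ w = ψ v` for all `v` that are not sinks. -/
def IsAlmostHarmonic (B : Matrix V V ℝ) (ψ : V → ℝ) : Prop :=
  ∀ v, ¬ IsSink B v → ∑ w, B v w * ψ w = ψ v

/-- A sink `s` is `B`-summable when `Σ_n (Bⁿ)_{v s} < ∞` for all `v`. -/
def IsSummableSink [DecidableEq V] (B : Matrix V V ℝ) (s : V) : Prop :=
  IsSink B s ∧ ∀ v, Summable (fun n : ℕ => (B ^ n) v s)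

/-- The vector `φ^s` associated to a `B`-summable sink `s`. -/
noncomputable def phiSink [DecidableEq V] (B : Matrix V V ℝ) (s : V) : V → ℝ :=
  fun v => (∑' n : ℕ, (B ^ n) v s) / (∑ w, ∑' n : ℕ, (B ^ n) w s)

/-- `v ⤳ w`: `(Bⁿ)_{vw} > 0` for some `n ≥ 0`. -/
def Reaches [DecidableEq V] (B : Matrix V V ℝ) (v w : V) : Prop :=
  ∃ n : ℕ, 0 < (B ^ n) v w

/-- The closure of a set of vertices: all vertices that reach it. -/
def closureSet [DecidableEq V] (B : Matrix V V ℝ) (F : Set V) : Set V :=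
  {v | ∃ w ∈ F, Reaches B v w}

/-- A component: an equivalence class of `∼` on which `B` is nonzero. -/
def IsComponent [DecidableEq V] (B : Matrix V V ℝ) (C : Set V) : Prop :=
  (∃ v, C = {w | Reaches B v w ∧ Reaches B w v}) ∧
  ∃ v ∈ C, ∃ w ∈ C, B v w ≠ 0

/-- A `B`-harmonic component. -/
def IsHarmonicComponent [DecidableEq V] (B : Matrix V V ℝ) (C : Set V) : Prop :=
  IsComponent B C ∧ specRadOn B C = 1 ∧
  ((closureSet B C \ C).Nonempty → specRadOn B (closureSet B C \ C) < 1)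

/-- The property characterizing the vector `φ^C` of a `B`-harmonic component `C`. -/
def IsPhiC [DecidableEq V] (B : Matrix V V ℝ) (C : Set V) (φ : V → ℝ) : Prop :=
  (∀ v, 0 ≤ φ v) ∧ (∑ v, φ v = 1) ∧ IsHarmonic B φ ∧
  (∀ v ∈ C, ∑ w, Set.indicator C (fun w => B v w * φ w) w = φ v) ∧
  (∀ v, φ v ≠ 0 ↔ v ∈ closureSet B C)

open scoped Classical in
/-- The vector `φ^C` of a `B`-harmonic component `C` (defined by choice; for a `B`-harmonic
component it is unique). -/
noncomputable def phiComp [DecidableEq V] (B : Matrix V V ℝ) (C : Set V) : V → ℝ :=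
  if h : ∃ φ : V → ℝ, IsPhiC B C φ then h.choose else 0

/-!
Everything rests on one maximum principle. Let `ψ ≥ 0` be superharmonic, let `f` be subharmonic with
support inside that of `ψ`, and let `K` be the largest value of `f / ψ`, attained at `m`. Then
`K ψ - f` is nonnegative, superharmonic and zero at `m`, hence zero at every vertex `m` reaches.

With `f` a Perron vector, this shows that the part of the support strictly above a class has
spectral radius less than `1`. So the terminal classes of the support of a harmonic `ψ` are harmonic
components, and on each of them `ψ` is a multiple of `φ^C`. With `f` the absolute value of the
difference of two harmonic vectors, it shows that a harmonic vector supported in the support of `ψ`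
is determined by its values on these terminal classes. Finally, distinct harmonic components do not
reach each other, so `φ^C` vanishes on all harmonic components but `C` and the coefficient of `φ^C`
can be read off on `C`.
-/

open scoped Matrix Topology

section SpectralRadius

variable {l m n : Type*} [Fintype n]

theorem mulVec_le_mulVec {A : Matrix m n ℝ} (hA : ∀ i j, 0 ≤ A i j) {x y : n → ℝ} (h : x ≤ y) :
    A *ᵥ x ≤ A *ᵥ y :=
  fun i => dotProduct_le_dotProduct_of_nonneg_left h (hA i)

theorem mulVec_nonneg {A : Matrix m n ℝ} (hA : ∀ i j, 0 ≤ A i j) {x : n → ℝ} (hx : 0 ≤ x) :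
    0 ≤ A *ᵥ x :=
  fun i => dotProduct_nonneg_of_nonneg (hA i) hx

theorem apply_mul_le_mulVec {A : Matrix m n ℝ} (hA : ∀ i j, 0 ≤ A i j) {x : n → ℝ} (hx : 0 ≤ x)
    (i : m) (j : n) : A i j * x j ≤ (A *ᵥ x) i :=
  single_le_sum (f := fun j => A i j * x j) (fun k _ => mul_nonneg (hA i k) (hx k)) (mem_univ j)

theorem mulVec_apply_congr {A : Matrix m n ℝ} {x y : n → ℝ} {i : m}
    (h : ∀ j, A i j ≠ 0 → x j = y j) : (A *ᵥ x) i = (A *ᵥ y) i :=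
  sum_congr rfl fun j _ => by
    change A i j * x j = A i j * y j
    by_cases hj : A i j = 0
    · rw [hj, zero_mul, zero_mul]
    · rw [h j hj]

variable [Fintype l] [Fintype m]

/-- The entrywise ℓ¹-norm of a real matrix, the norm with which `specRad` is computed. -/
def l1Norm (A : Matrix m n ℝ) : ℝ := ∑ i, ∑ j, |A i j|

theorem l1Norm_nonneg (A : Matrix m n ℝ) : 0 ≤ l1Norm A := by
  unfold l1Norm; positivity

theorem sum_abs_row_le_l1Norm (A : Matrix m n ℝ) (i : m) : ∑ j, |A i j| ≤ l1Norm A :=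
  single_le_sum (f := fun i => ∑ j, |A i j|) (fun _ _ => by positivity) (mem_univ i)

theorem l1Norm_mul_le (A : Matrix l m ℝ) (B : Matrix m n ℝ) :
    l1Norm (A * B) ≤ l1Norm A * l1Norm B :=
  calc l1Norm (A * B)
      ≤ ∑ i, ∑ j, ∑ k, |A i k| * |B k j| := by
        unfold l1Norm
        gcongr with i _ j
        simpa only [Matrix.mul_apply, abs_mul] using
          abs_sum_le_sum_abs (fun k => A i k * B k j) univ
    _ = ∑ i, ∑ k, |A i k| * ∑ j, |B k j| := by
        simp only [mul_sum, sum_comm (s := (univ : Finset n))]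
    _ ≤ ∑ i, ∑ k, |A i k| * l1Norm B := by
        gcongr with i _ k
        exact sum_abs_row_le_l1Norm B k
    _ = l1Norm A * l1Norm B := by simp only [l1Norm, sum_mul]

theorem norm_mulVec_le (A : Matrix m n ℝ) (x : n → ℝ) : ‖A *ᵥ x‖ ≤ l1Norm A * ‖x‖ := by
  refine (pi_norm_le_iff_of_nonneg (mul_nonneg (l1Norm_nonneg A) (norm_nonneg x))).2 fun i => ?_
  calc ‖(A *ᵥ x) i‖ ≤ ∑ j, ‖A i j * x j‖ := norm_sum_le univ fun j => A i j * x j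
    _ ≤ ∑ j, |A i j| * ‖x‖ := by
        gcongr with j
        rw [norm_mul, Real.norm_eq_abs]
        gcongr
        exact norm_le_pi_norm x j
    _ ≤ l1Norm A * ‖x‖ := by
        rw [← sum_mul]
        gcongr
        exact sum_abs_row_le_l1Norm A i

variable [DecidableEq n] {M : Matrix n n ℝ}

theorem pow_mulVec_eq_pow_smul {x : n → ℝ} {μ : ℝ} (h : M *ᵥ x = μ • x) (k : ℕ) :
    (M ^ k) *ᵥ x = μ ^ k • x := by
  induction k with
  | zero => simp
  | succ k ih =>
    rw [pow_succ, ← Matrix.mulVec_mulVec, h, Matrix.mulVec_smul, ih, smul_smul, pow_succ']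

theorem pow_mulVec_le_pow_smul (hM : ∀ i j, 0 ≤ M i j) {x : n → ℝ} {θ : ℝ} (hθ : 0 ≤ θ)
    (h : M *ᵥ x ≤ θ • x) (k : ℕ) : (M ^ k) *ᵥ x ≤ θ ^ k • x := by
  induction k with
  | zero => simp
  | succ k ih =>
    calc (M ^ (k + 1)) *ᵥ x = (M ^ k) *ᵥ (M *ᵥ x) := by rw [pow_succ, Matrix.mulVec_mulVec]
      _ ≤ (M ^ k) *ᵥ (θ • x) := mulVec_le_mulVec (Matrix.pow_apply_nonneg hM k) h
      _ = θ • (M ^ k) *ᵥ x := Matrix.mulVec_smul _ _ _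
      _ ≤ θ • θ ^ k • x := smul_le_smul_of_nonneg_left ih hθ
      _ = θ ^ (k + 1) • x := by rw [smul_smul, pow_succ']

theorem l1Norm_pow_le (M : Matrix n n ℝ) {k : ℕ} (hk : k ≠ 0) : l1Norm (M ^ k) ≤ l1Norm M ^ k := by
  induction k, Nat.one_le_iff_ne_zero.2 hk using Nat.le_induction with
  | base => simp
  | succ k _ ih =>
    rw [pow_succ, pow_succ]
    exact (l1Norm_mul_le _ _).trans (mul_le_mul_of_nonneg_right (ih (by lia)) (l1Norm_nonneg M))

theorem isBoundedUnder_l1Norm_pow_rpow (M : Matrix n n ℝ) :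
    IsBoundedUnder (· ≤ ·) atTop fun k : ℕ => l1Norm (M ^ k) ^ ((1 : ℝ) / k) := by
  refine isBoundedUnder_of_eventually_le (a := l1Norm M) ?_
  filter_upwards [eventually_ne_atTop 0] with k hk
  calc l1Norm (M ^ k) ^ ((1 : ℝ) / k) ≤ (l1Norm M ^ k) ^ ((1 : ℝ) / k) := by
        gcongr
        · exact l1Norm_nonneg _
        · exact l1Norm_pow_le M hk
    _ = l1Norm M := by rw [one_div, Real.pow_rpow_inv_natCast (l1Norm_nonneg M) hk]

theorem isCoboundedUnder_l1Norm_pow_rpow (M : Matrix n n ℝ) :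
    IsCoboundedUnder (· ≤ ·) atTop fun k : ℕ => l1Norm (M ^ k) ^ ((1 : ℝ) / k) :=
  isCoboundedUnder_le_of_le atTop fun _ => Real.rpow_nonneg (l1Norm_nonneg _) _

theorem specRad_nonneg (M : Matrix n n ℝ) : 0 ≤ specRad M :=
  le_limsup_of_frequently_le
    (Frequently.of_forall fun _ => Real.rpow_nonneg (l1Norm_nonneg _) _)
    (isBoundedUnder_l1Norm_pow_rpow M)

theorem eventually_l1Norm_pow_le_of_specRad_lt {r : ℝ} (h : specRad M < r) :
    ∀ᶠ k : ℕ in atTop, l1Norm (M ^ k) ≤ r ^ k := by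
  filter_upwards [eventually_lt_of_limsup_lt h (isBoundedUnder_l1Norm_pow_rpow M),
    eventually_ne_atTop 0] with k hlt hk
  calc l1Norm (M ^ k) = (l1Norm (M ^ k) ^ ((1 : ℝ) / k)) ^ k := by
        rw [one_div, Real.rpow_inv_natCast_pow (l1Norm_nonneg _) hk]
    _ ≤ r ^ k := pow_le_pow_left₀ (Real.rpow_nonneg (l1Norm_nonneg _) _) hlt.le k

theorem specRad_le_of_l1Norm_pow_le {b θ : ℝ} (hb : 0 < b) (hθ : 0 ≤ θ)
    (h : ∀ k : ℕ, l1Norm (M ^ k) ≤ b * θ ^ k) : specRad M ≤ θ := by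
  have hlim : Tendsto (fun k : ℕ => b ^ ((1 : ℝ) / k) * θ) atTop (𝓝 θ) := by
    simpa using ((Real.continuousAt_const_rpow hb.ne').tendsto.comp
      (tendsto_one_div_atTop_nhds_zero_nat (𝕜 := ℝ))).mul_const θ
  refine (limsup_le_limsup ?_ (isCoboundedUnder_l1Norm_pow_rpow M)
    hlim.isBoundedUnder_le).trans_eq hlim.limsup_eq
  filter_upwards [eventually_ne_atTop 0] with k hk
  calc l1Norm (M ^ k) ^ ((1 : ℝ) / k) ≤ (b * θ ^ k) ^ ((1 : ℝ) / k) := by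
        gcongr
        · exact l1Norm_nonneg _
        · exact h k
    _ = b ^ ((1 : ℝ) / k) * θ := by
        rw [Real.mul_rpow hb.le (by positivity), one_div, Real.pow_rpow_inv_natCast hθ hk]

theorem abs_le_specRad_of_mulVec_eq_smul {x : n → ℝ} (hx : x ≠ 0) {μ : ℝ} (h : M *ᵥ x = μ • x) :
    |μ| ≤ specRad M := by
  by_contra! hlt
  obtain ⟨r, hr, hrμ⟩ := exists_between hlt
  obtain ⟨k, hk, hk0⟩ :=
    ((eventually_l1Norm_pow_le_of_specRad_lt hr).and (eventually_ne_atTop 0)).exists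
  have hpow : r ^ k < |μ| ^ k := pow_lt_pow_left₀ hrμ ((specRad_nonneg M).trans hr.le) hk0
  have hnorm : |μ| ^ k * ‖x‖ ≤ r ^ k * ‖x‖ :=
    calc |μ| ^ k * ‖x‖ = ‖(M ^ k) *ᵥ x‖ := by
          rw [pow_mulVec_eq_pow_smul h, norm_smul, Real.norm_eq_abs, abs_pow]
      _ ≤ l1Norm (M ^ k) * ‖x‖ := norm_mulVec_le _ _
      _ ≤ r ^ k * ‖x‖ := by gcongr
  exact hpow.not_ge (le_of_mul_le_mul_right hnorm (norm_pos_iff.2 hx))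

theorem specRad_le_of_mulVec_le_smul (hM : ∀ i j, 0 ≤ M i j) {x : n → ℝ} (hx : ∀ i, 0 < x i)
    {θ : ℝ} (hθ : 0 ≤ θ) (h : M *ᵥ x ≤ θ • x) : specRad M ≤ θ := by
  have hx0 : 0 ≤ x := fun i => (hx i).le
  have hentry : ∀ (k : ℕ) (i j : n), |(M ^ k) i j| ≤ x i / x j * θ ^ k := fun k i j => by
    have hk := Matrix.pow_apply_nonneg hM k
    rw [abs_of_nonneg (hk i j), div_mul_eq_mul_div, le_div_iff₀ (hx j), mul_comm (x i)]
    exact (apply_mul_le_mulVec hk hx0 i j).trans (pow_mulVec_le_pow_smul hM hθ h k i)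
  have hb : 0 ≤ ∑ i, ∑ j, x i / x j :=
    sum_nonneg fun i _ => sum_nonneg fun j _ => div_nonneg (hx0 i) (hx0 j)
  refine specRad_le_of_l1Norm_pow_le (b := ∑ i, ∑ j, x i / x j + 1) (by linarith) hθ fun k => ?_
  calc l1Norm (M ^ k) ≤ ∑ i, ∑ j, x i / x j * θ ^ k :=
        sum_le_sum fun i _ => sum_le_sum fun j _ => hentry k i j
    _ = (∑ i, ∑ j, x i / x j) * θ ^ k := by simp only [sum_mul]
    _ ≤ (∑ i, ∑ j, x i / x j + 1) * θ ^ k := by gcongr; linarith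

theorem exists_nonneg_smul_eq_add_mulVec (hM : ∀ i j, 0 ≤ M i j) {r : ℝ} (hr : specRad M < r)
    {b : n → ℝ} (hb : 0 ≤ b) : ∃ y, 0 ≤ y ∧ r • y = b + M *ᵥ y := by
  have hr0 : 0 < r := (specRad_nonneg M).trans_lt hr
  obtain ⟨s, hs, hsr⟩ := exists_between hr
  have hs0 : 0 ≤ s := (specRad_nonneg M).trans hs.le
  -- The solution is the Neumann series `y = ∑ₖ r^{-(k+1)} Mᵏ b`.
  let u : ℕ → n → ℝ := fun k => (r⁻¹ ^ (k + 1)) • (M ^ k) *ᵥ b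
  have hu : Summable u := by
    refine .of_norm_bounded_eventually_nat (g := fun k => (s / r) ^ k * (r⁻¹ * ‖b‖))
      ((summable_geometric_of_lt_one (by positivity) ((div_lt_one hr0).2 hsr)).mul_right _) ?_
    filter_upwards [eventually_l1Norm_pow_le_of_specRad_lt hs] with k hk
    calc ‖u k‖ = r⁻¹ ^ (k + 1) * ‖(M ^ k) *ᵥ b‖ := by
          rw [norm_smul, Real.norm_of_nonneg (by positivity)]
      _ ≤ r⁻¹ ^ (k + 1) * (s ^ k * ‖b‖) := by
          gcongr
          exact (norm_mulVec_le _ _).trans (by gcongr)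
      _ = (s / r) ^ k * (r⁻¹ * ‖b‖) := by ring
  have hu0 : r • u 0 = b := by simp [u, hr0.ne']
  have hu_succ : ∀ k, r • u (k + 1) = M *ᵥ u k := fun k => by
    rw [Matrix.mulVec_smul, smul_smul, Matrix.mulVec_mulVec, ← pow_succ', pow_succ' r⁻¹ (k + 1),
      mul_inv_cancel_left₀ hr0.ne']
  refine ⟨∑' k, u k, tsum_nonneg fun k => smul_nonneg (by positivity)
    (mulVec_nonneg (Matrix.pow_apply_nonneg hM k) hb), ?_⟩
  calc r • ∑' k, u k = b + ∑' k, M *ᵥ u k := by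
        simp only [hu.tsum_eq_zero_add, smul_add, hu0,
          ← ((summable_nat_add_iff 1).2 hu).tsum_const_smul, hu_succ]
    _ = b + M *ᵥ ∑' k, u k := by
        congr 1
        exact (M.mulVecLin.toContinuousLinearMap.map_tsum hu).symm

theorem exists_mem_stdSimplex_mulVec_add_eq [Nonempty n] (hM : ∀ i j, 0 ≤ M i j) {r : ℝ}
    (hr : specRad M < r) : ∃ p ∈ stdSimplex ℝ n, ∃ c, 0 ≤ c ∧ ∀ i, r * p i - (M *ᵥ p) i = c := by
  obtain ⟨y, hy0, hy⟩ := exists_nonneg_smul_eq_add_mulVec hM hr (b := 1) zero_le_one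
  have hs : 0 < ∑ i, y i := by
    refine (sum_nonneg fun i _ => hy0 i).lt_of_ne' fun hs => ?_
    have hy_zero : y = 0 := (Fintype.sum_eq_zero_iff_of_nonneg hy0).1 hs
    simp [hy_zero] at hy
  refine ⟨(∑ i, y i)⁻¹ • y, ⟨fun i => mul_nonneg (inv_nonneg.2 hs.le) (hy0 i), ?_⟩,
    (∑ i, y i)⁻¹, inv_nonneg.2 hs.le, fun i => ?_⟩
  · simp only [Pi.smul_apply, smul_eq_mul, ← mul_sum, inv_mul_cancel₀ hs.ne']
  · have hyi : r * y i = 1 + (M *ᵥ y) i := congrFun hy i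
    rw [Matrix.mulVec_smul, Pi.smul_apply, Pi.smul_apply, smul_eq_mul, smul_eq_mul]
    linear_combination (∑ i, y i)⁻¹ * hyi

theorem exists_mem_stdSimplex_specRad_mul_sub_eq [Nonempty n] (hM : ∀ i j, 0 ≤ M i j) :
    ∃ p ∈ stdSimplex ℝ n, ∃ c, 0 ≤ c ∧ ∀ i, specRad M * p i - (M *ᵥ p) i = c := by
  -- A limit point of the normalized resolvent vectors as the parameter decreases to `ρ`.
  choose! p hp c hc hpc using fun r => exists_mem_stdSimplex_mulVec_add_eq hM (r := r)
  let r : ℕ → ℝ := fun k => specRad M + 1 / ((k : ℝ) + 1)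
  have hr : ∀ k, specRad M < r k := fun k => lt_add_of_pos_right _ (by positivity)
  have hr_lim : Tendsto r atTop (𝓝 (specRad M)) := by
    simpa [r] using (tendsto_one_div_add_atTop_nhds_zero_nat (𝕜 := ℝ)).const_add (specRad M)
  obtain ⟨z, hz, φ, hφ, hz_lim⟩ :=
    (isCompact_stdSimplex ℝ n).tendsto_subseq fun k => hp (r k) (hr k)
  have hlim : ∀ i, Tendsto (fun k => c (r (φ k))) atTop (𝓝 (specRad M * z i - (M *ᵥ z) i)) := by
    intro i
    have hcont : Continuous fun q : ℝ × (n → ℝ) => q.1 * q.2 i - (M *ᵥ q.2) i := by fun_prop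
    refine ((hcont.tendsto _).comp
      ((hr_lim.comp hφ.tendsto_atTop).prodMk_nhds hz_lim)).congr fun k => ?_
    exact hpc _ (hr _) i
  obtain ⟨i₀⟩ := ‹Nonempty n›
  exact ⟨z, hz, _, ge_of_tendsto' (hlim i₀) fun k => hc _ (hr _),
    fun i => tendsto_nhds_unique (hlim i) (hlim i₀)⟩

theorem exists_mem_stdSimplex_mulVec_eq_specRad_smul [Nonempty n] (hM : ∀ i j, 0 ≤ M i j) :
    ∃ z ∈ stdSimplex ℝ n, M *ᵥ z = specRad M • z := by
  obtain ⟨z, hz, c, hc0, hc⟩ := exists_mem_stdSimplex_specRad_mul_sub_eq hM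
  -- If `c > 0` then `z > 0` and `M z ≤ (ρ - c) z`, so that `ρ ≤ ρ - c`.
  suffices c = 0 from ⟨z, hz, funext fun i => by
    rw [Pi.smul_apply, smul_eq_mul]; linarith [hc i]⟩
  by_contra! hne
  have hc_pos : 0 < c := hc0.lt_of_ne' hne
  have hc_le : ∀ i, c ≤ specRad M * z i := fun i => by
    have hMz : 0 ≤ (M *ᵥ z) i := mulVec_nonneg hM hz.1 i
    linarith [hc i]
  have hz_pos : ∀ i, 0 < z i := fun i =>
    pos_of_mul_pos_right (hc_pos.trans_le (hc_le i)) (specRad_nonneg M)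
  have hz_le : ∀ i, z i ≤ 1 := fun i => (mem_Icc_of_mem_stdSimplex hz i).2
  have hc_le_specRad : c ≤ specRad M := by
    obtain ⟨i⟩ := ‹Nonempty n›
    exact (hc_le i).trans (mul_le_of_le_one_right (specRad_nonneg M) (hz_le i))
  have hle : specRad M ≤ specRad M - c :=
    specRad_le_of_mulVec_le_smul hM hz_pos (sub_nonneg.2 hc_le_specRad) fun i => by
      rw [Pi.smul_apply, smul_eq_mul]
      nlinarith [hc i, hz_le i]
  linarith

end SpectralRadius

section Restriction

variable {B : Matrix V V ℝ} {S : Set V}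

theorem specRadOn_eq_specRad_submatrix [Fintype S] [DecidableEq S] (B : Matrix V V ℝ) :
    specRadOn B S = specRad (B.submatrix ((↑) : S → V) (↑)) := by
  change @specRad S (Set.toFinite S).fintype (Classical.decEq S) (B.submatrix (↑) (↑)) = _
  congr!

theorem submatrix_mulVec_domRestrict [Fintype S] {y : V → ℝ} (hy : ∀ v ∉ S, y v = 0) (i : S) :
    (B.submatrix ((↑) : S → V) (↑) *ᵥ S.domRestrict y) i = (B *ᵥ y) i :=
  Fintype.sum_of_injective _ Subtype.val_injective _ _
    (fun v hv => mul_eq_zero_of_right (B i v) (hy v (by simpa using hv))) fun _ => rfl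

omit [Fintype V] in
theorem exists_domRestrict_eq_of_zero_off (x : S → ℝ) :
    ∃ y : V → ℝ, S.domRestrict y = x ∧ ∀ v ∉ S, y v = 0 :=
  ⟨Function.extend Subtype.val x 0, funext (Subtype.val_injective.extend_apply x 0),
    fun _ hv => Function.extend_val_apply' hv⟩

theorem exists_perron_vector_on (hB : ∀ v w, 0 ≤ B v w) (hS : S.Nonempty) :
    ∃ z : V → ℝ, 0 ≤ z ∧ (∀ v ∉ S, z v = 0) ∧ (∃ v ∈ S, 0 < z v) ∧
      ∀ v ∈ S, (B *ᵥ z) v = specRadOn B S * z v := by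
  classical
  have := Fintype.ofFinite S
  have := hS.to_subtype
  obtain ⟨x, hx, hx_eq⟩ :=
    exists_mem_stdSimplex_mulVec_eq_specRad_smul (M := B.submatrix ((↑) : S → V) (↑))
      fun i j => hB i j
  obtain ⟨z, rfl, hz_off⟩ := exists_domRestrict_eq_of_zero_off x
  refine ⟨z, fun v => ?_, hz_off, ?_, fun v hv => ?_⟩
  · by_cases hv : v ∈ S
    · exact hx.1 ⟨v, hv⟩
    · exact (hz_off v hv).ge
  · obtain ⟨v, -, hv⟩ := exists_lt_of_sum_lt (s := univ) (f := 0) (g := S.domRestrict z)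
      (by rw [hx.2]; simp)
    exact ⟨v, v.2, hv⟩
  · rw [specRadOn_eq_specRad_submatrix, ← submatrix_mulVec_domRestrict hz_off ⟨v, hv⟩, hx_eq]
    rfl

theorem exists_nonneg_eq_add_mulVec_on (hB : ∀ v w, 0 ≤ B v w) (hS : specRadOn B S < 1)
    {b : V → ℝ} (hb : 0 ≤ b) :
    ∃ y : V → ℝ, 0 ≤ y ∧ (∀ v ∉ S, y v = 0) ∧ ∀ v ∈ S, y v = b v + (B *ᵥ y) v := by
  classical
  have := Fintype.ofFinite S
  rw [specRadOn_eq_specRad_submatrix] at hS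
  obtain ⟨x, hx, hx_eq⟩ := exists_nonneg_smul_eq_add_mulVec
    (M := B.submatrix ((↑) : S → V) (↑)) (fun i j => hB i j) hS (b := S.domRestrict b)
    fun i => hb i
  obtain ⟨y, rfl, hy_off⟩ := exists_domRestrict_eq_of_zero_off x
  refine ⟨y, fun v => ?_, hy_off, fun v hv => ?_⟩
  · by_cases hv : v ∈ S
    · exact hx ⟨v, hv⟩
    · exact (hy_off v hv).ge
  · rw [one_smul] at hx_eq
    rw [← submatrix_mulVec_domRestrict hy_off ⟨v, hv⟩]
    exact congrFun hx_eq ⟨v, hv⟩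

theorem specRadOn_eq_one_of_mulVec_eq (hB : ∀ v w, 0 ≤ B v w) (hS : S.Nonempty) {y : V → ℝ}
    (hpos : ∀ v ∈ S, 0 < y v) (hoff : ∀ v ∉ S, y v = 0) (hy : ∀ v ∈ S, (B *ᵥ y) v = y v) :
    specRadOn B S = 1 := by
  classical
  have := Fintype.ofFinite S
  obtain ⟨v₀, hv₀⟩ := hS
  have hfix : B.submatrix ((↑) : S → V) (↑) *ᵥ S.domRestrict y = (1 : ℝ) • S.domRestrict y :=
    funext fun i => by
      rw [submatrix_mulVec_domRestrict hoff, hy i i.2, one_smul, Set.domRestrict_apply]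
  rw [specRadOn_eq_specRad_submatrix]
  refine le_antisymm (specRad_le_of_mulVec_le_smul (fun i j : S => hB i j)
    (fun i => hpos i i.2) zero_le_one hfix.le) ?_
  simpa only [abs_one] using abs_le_specRad_of_mulVec_eq_smul
    (fun h => (hpos v₀ hv₀).ne' (congrFun h (⟨v₀, hv₀⟩ : S))) hfix

theorem specRadOn_empty_lt_one (B : Matrix V V ℝ) : specRadOn B ∅ < 1 := by
  classical
  rw [specRadOn_eq_specRad_submatrix]
  exact (specRad_le_of_mulVec_le_smul isEmptyElim (x := 0) isEmptyElim le_rfl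
    isEmptyElim).trans_lt one_pos

theorem specRadOn_lt_one_of_nonempty_imp (h : S.Nonempty → specRadOn B S < 1) :
    specRadOn B S < 1 := by
  rcases S.eq_empty_or_nonempty with rfl | hS
  · exact specRadOn_empty_lt_one B
  · exact h hS

end Restriction

section Reachability

variable [DecidableEq V] {B : Matrix V V ℝ} {u v w : V} {C : Set V}

theorem Reaches.refl (B : Matrix V V ℝ) (v : V) : Reaches B v v := ⟨0, by simp⟩

theorem Reaches.of_pos (h : 0 < B v w) : Reaches B v w := ⟨1, by simpa using h⟩

theorem Reaches.trans (hB : ∀ v w, 0 ≤ B v w) (huv : Reaches B u v) (hvw : Reaches B v w) :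
    Reaches B u w := by
  obtain ⟨k, hk⟩ := huv
  obtain ⟨l, hl⟩ := hvw
  refine ⟨k + l, (mul_pos hk hl).trans_le ?_⟩
  rw [pow_add, Matrix.mul_apply]
  exact single_le_sum (f := fun x => (B ^ k) u x * (B ^ l) x w)
    (fun x _ => mul_nonneg (Matrix.pow_apply_nonneg hB k u x) (Matrix.pow_apply_nonneg hB l x w))
    (mem_univ v)

/-- The equivalence class of `v` under mutual reachability. -/
def reachClass (B : Matrix V V ℝ) (v : V) : Set V := {w | Reaches B v w ∧ Reaches B w v}

theorem self_mem_reachClass (B : Matrix V V ℝ) (v : V) : v ∈ reachClass B v :=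
  ⟨.refl B v, .refl B v⟩

theorem IsComponent.eq_reachClass (hB : ∀ v w, 0 ≤ B v w) (hC : IsComponent B C) (hv : v ∈ C) :
    C = reachClass B v := by
  obtain ⟨⟨u, rfl⟩, -⟩ := hC
  exact Set.ext fun w => ⟨fun hw => ⟨hv.2.trans hB hw.1, hw.2.trans hB hv.1⟩,
    fun hw => ⟨hv.1.trans hB hw.1, hw.2.trans hB hv.2⟩⟩

theorem IsComponent.nonempty (hC : IsComponent B C) : C.Nonempty :=
  let ⟨_, v, hv, _⟩ := hC
  ⟨v, hv⟩

theorem subset_closureSet (B : Matrix V V ℝ) (F : Set V) : F ⊆ closureSet B F :=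
  fun v hv => ⟨v, hv, .refl B v⟩

theorem Reaches.mem_closureSet (hB : ∀ v w, 0 ≤ B v w) (hvw : Reaches B v w)
    (hw : w ∈ closureSet B C) : v ∈ closureSet B C :=
  let ⟨u, hu, hwu⟩ := hw
  ⟨u, hu, hvw.trans hB hwu⟩

theorem IsComponent.mem_of_reaches (hB : ∀ v w, 0 ≤ B v w) (hC : IsComponent B C) (hv : v ∈ C)
    (hvw : Reaches B v w) (hw : w ∈ closureSet B C) : w ∈ C := by
  obtain ⟨u, hu, hwu⟩ := hw
  rw [hC.eq_reachClass hB hv] at hu ⊢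
  exact ⟨hvw, hwu.trans hB hu.2⟩

theorem IsComponent.reaches_of_mem_closureSet (hB : ∀ v w, 0 ≤ B v w) (hC : IsComponent B C)
    (hv : v ∈ closureSet B C) (hw : w ∈ C) : Reaches B v w := by
  obtain ⟨u, hu, hvu⟩ := hv
  rw [hC.eq_reachClass hB hw] at hu
  exact hvu.trans hB hu.2

/-- A vertex of the support of `ψ` that is reached back from every vertex of the support it
reaches, i.e. one whose class is terminal among the classes of the support. -/
def IsTerminal (B : Matrix V V ℝ) (ψ : V → ℝ) (w : V) : Prop :=
  0 < ψ w ∧ ∀ u, 0 < ψ u → Reaches B w u → Reaches B u w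

theorem exists_isTerminal_reaches (hB : ∀ v w, 0 ≤ B v w) {ψ : V → ℝ} (hv : 0 < ψ v) :
    ∃ w, IsTerminal B ψ w ∧ Reaches B v w := by
  let : Preorder V :=
    { le := Reaches B, le_refl := .refl B, le_trans := fun _ _ _ => .trans hB }
  obtain ⟨w, hvw, hw⟩ := (Set.toFinite {u | 0 < ψ u}).exists_le_maximal hv
  exact ⟨w, ⟨hw.prop, fun _ hu hwu => hw.le_of_ge hu hwu⟩, hvw⟩

end Reachability

section MaximumPrinciple

variable {B : Matrix V V ℝ} {ψ f : V → ℝ} {v w : V}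

theorem IsHarmonic.mulVec_eq (hψ : IsHarmonic B ψ) : B *ᵥ ψ = ψ := funext hψ

theorem IsHarmonic.sum_mul {ι : Type*} {I : Finset ι} {φ : ι → V → ℝ} (c : ι → ℝ)
    (h : ∀ i ∈ I, IsHarmonic B (φ i)) : IsHarmonic B fun v => ∑ i ∈ I, c i * φ i v := fun v => by
  simp only [mul_sum, mul_left_comm (B v _)]
  rw [sum_comm]
  refine sum_congr rfl fun i hi => ?_
  rw [← mul_sum, h i hi v]

variable [DecidableEq V]

theorem Reaches.pos_of_mulVec_le (hB : ∀ v w, 0 ≤ B v w) (h0 : 0 ≤ ψ) (hψ : B *ᵥ ψ ≤ ψ)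
    (hvw : Reaches B v w) (hw : 0 < ψ w) : 0 < ψ v := by
  obtain ⟨k, hk⟩ := hvw
  calc 0 < (B ^ k) v w * ψ w := mul_pos hk hw
    _ ≤ (B ^ k *ᵥ ψ) v := apply_mul_le_mulVec (Matrix.pow_apply_nonneg hB k) h0 v w
    _ ≤ ψ v := by
      simpa using pow_mulVec_le_pow_smul hB zero_le_one (by simpa using hψ) k v

theorem pos_of_mem_closureSet {F : Set V} (hB : ∀ v w, 0 ≤ B v w) (h0 : 0 ≤ ψ) (hψ : B *ᵥ ψ ≤ ψ)
    (hF : ∀ v ∈ F, 0 < ψ v) (hv : v ∈ closureSet B F) : 0 < ψ v :=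
  let ⟨w, hw, hvw⟩ := hv
  hvw.pos_of_mulVec_le hB h0 hψ (hF w hw)

theorem exists_eq_mul_of_le_mulVec (hB : ∀ v w, 0 ≤ B v w) (h0 : 0 ≤ ψ) (hψ : B *ᵥ ψ ≤ ψ)
    (hf : f ≤ B *ᵥ f) (hfψ : ∀ v, ψ v = 0 → f v = 0) (hv : 0 < f v) :
    ∃ K > 0, ∃ m, 0 < ψ m ∧ ∀ w, Reaches B m w → f w = K * ψ w := by
  have hpos : ∀ {u}, f u ≠ 0 → 0 < ψ u := fun hu => (h0 _).lt_of_ne' fun h => hu (hfψ _ h)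
  -- `K` is the least multiple of `ψ` dominating `f`, attained at `m`.
  obtain ⟨m, hm, hmax⟩ := exists_max_image ({u | 0 < ψ u} : Finset V) (fun u => f u / ψ u)
    ⟨v, by simpa using hpos hv.ne'⟩
  simp only [mem_filter, mem_univ, true_and] at hm hmax
  have hK : 0 < f m / ψ m := (div_pos hv (hpos hv.ne')).trans_le (hmax v (hpos hv.ne'))
  refine ⟨f m / ψ m, hK, m, hm, fun w hmw => ?_⟩
  let g : V → ℝ := (f m / ψ m) • ψ - f
  have hg0 : 0 ≤ g := fun u => sub_nonneg.2 <| by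
    rcases (h0 u).eq_or_lt' with hu | hu
    · simp [hu, hfψ u hu]
    · exact (div_le_iff₀ hu).1 (hmax u hu)
  have hg : B *ᵥ g ≤ g := by
    rw [Matrix.mulVec_sub, Matrix.mulVec_smul]
    exact sub_le_sub (smul_le_smul_of_nonneg_left hψ hK.le) hf
  by_contra! hne
  have hgw : 0 < g w := (hg0 w).lt_of_ne' (sub_ne_zero.2 hne.symm)
  have hgm : g m = 0 := by simp [g, hm.ne']
  exact (hmw.pos_of_mulVec_le hB hg0 hg hgw).ne' hgm

end MaximumPrinciple

section HarmonicComponent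

variable [DecidableEq V] {B : Matrix V V ℝ} {C C' F : Set V} {ψ : V → ℝ} {v w : V}

theorem apply_eq_zero_of_notMem_closureSet (hB : ∀ v w, 0 ≤ B v w) (hv : v ∉ closureSet B F)
    (hw : w ∈ closureSet B F) : B v w = 0 := by
  by_contra hvw
  exact hv ((Reaches.of_pos ((hB v w).lt_of_ne' hvw)).mem_closureSet hB hw)

theorem IsComponent.apply_eq_zero (hB : ∀ v w, 0 ≤ B v w) (hC : IsComponent B C) (hv : v ∈ C)
    (hw : w ∈ closureSet B C \ C) : B v w = 0 := by
  by_contra hvw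
  exact hw.2 (hC.mem_of_reaches hB hv (.of_pos ((hB v w).lt_of_ne' hvw)) hw.1)

theorem specRadOn_closureSet_diff_lt_one (hB : ∀ v w, 0 ≤ B v w) (h0 : 0 ≤ ψ) (hψ : B *ᵥ ψ ≤ ψ)
    (hF : ∀ v ∈ F, 0 < ψ v) : specRadOn B (closureSet B F \ F) < 1 := by
  refine specRadOn_lt_one_of_nonempty_imp fun hD => ?_
  obtain ⟨z, hz0, hz_off, ⟨v, -, hv⟩, hz⟩ := exists_perron_vector_on hB hD
  have hz_mem : ∀ {u}, 0 < z u → u ∈ closureSet B F \ F := fun hu => by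
    by_contra h
    exact hu.ne' (hz_off _ h)
  by_contra! hρ
  have hz_sub : z ≤ B *ᵥ z := fun u => by
    by_cases hu : u ∈ closureSet B F \ F
    · rw [hz u hu]
      exact le_mul_of_one_le_left (hz0 u) hρ
    · rw [hz_off u hu]
      exact mulVec_nonneg hB hz0 u
  have hzψ : ∀ u, ψ u = 0 → z u = 0 := fun u hu => hz_off u fun h =>
    (pos_of_mem_closureSet hB h0 hψ hF h.1).ne' hu
  obtain ⟨K, hK, m, hm, hzK⟩ := exists_eq_mul_of_le_mulVec hB h0 hψ hz_sub hzψ hv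
  have hz_pos : ∀ u, Reaches B m u → 0 < ψ u → 0 < z u := fun u hmu hu => by
    rw [hzK u hmu]
    exact mul_pos hK hu
  obtain ⟨⟨x, hx, hmx⟩, -⟩ := hz_mem (hz_pos m (.refl B m) hm)
  exact (hz_mem (hz_pos x hmx (hF x hx))).2 hx

theorem IsHarmonicComponent.isComponent (hC : IsHarmonicComponent B C) : IsComponent B C := hC.1

theorem IsHarmonicComponent.specRadOn_diff_lt_one (hC : IsHarmonicComponent B C) :
    specRadOn B (closureSet B C \ C) < 1 :=
  specRadOn_lt_one_of_nonempty_imp hC.2.2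

theorem IsHarmonicComponent.exists_isHarmonic (hB : ∀ v w, 0 ≤ B v w)
    (hC : IsHarmonicComponent B C) :
    ∃ x : V → ℝ, 0 ≤ x ∧ (∀ v ∉ closureSet B C, x v = 0) ∧ (∃ v ∈ C, 0 < x v) ∧
      IsHarmonic B x := by
  -- A Perron vector `z` of `C` extends to the vertices above `C` by solving `y = B z + B y` there.
  obtain ⟨z, hz0, hz_off, ⟨v₀, hv₀, hzv₀⟩, hz⟩ := exists_perron_vector_on hB hC.isComponent.nonempty
  obtain ⟨y, hy0, hy_off, hy⟩ := exists_nonneg_eq_add_mulVec_on hB hC.specRadOn_diff_lt_one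
    (mulVec_nonneg hB hz0)
  rw [hC.2.1] at hz
  have hx_off : ∀ v ∉ closureSet B C, (z + y) v = 0 := fun v hv => by
    rw [Pi.add_apply, hz_off v fun h => hv (subset_closureSet B C h),
      hy_off v fun h => hv h.1, add_zero]
  refine ⟨z + y, add_nonneg hz0 hy0, hx_off, ⟨v₀, hv₀, add_pos_of_pos_of_nonneg hzv₀ (hy0 v₀)⟩,
    fun v => ?_⟩
  change (B *ᵥ (z + y)) v = z v + y v
  by_cases hvcl : v ∈ closureSet B C
  · rw [Matrix.mulVec_add, Pi.add_apply]
    by_cases hv : v ∈ C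
    · have hBy : (B *ᵥ y) v = (B *ᵥ 0) v := mulVec_apply_congr fun w hvw =>
        hy_off w fun hw => hvw (hC.isComponent.apply_eq_zero hB hv hw)
      rw [hz v hv, hBy, hy_off v fun h => h.2 hv, Matrix.mulVec_zero, Pi.zero_apply, one_mul]
    · rw [hz_off v hv, hy v ⟨hvcl, hv⟩, zero_add]
  · have hBx : (B *ᵥ (z + y)) v = (B *ᵥ 0) v := mulVec_apply_congr fun w hvw =>
      hx_off w fun hw => hvw (apply_eq_zero_of_notMem_closureSet hB hvcl hw)
    rw [hBx, Matrix.mulVec_zero]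
    exact (hx_off v hvcl).symm

theorem IsHarmonicComponent.exists_isPhiC (hB : ∀ v w, 0 ≤ B v w)
    (hC : IsHarmonicComponent B C) : ∃ φ, IsPhiC B C φ := by
  obtain ⟨x, hx0, hx_off, ⟨v₀, hv₀, hxv₀⟩, hx⟩ := hC.exists_isHarmonic hB
  have hx_pos : ∀ v ∈ closureSet B C, 0 < x v := fun v hv =>
    (hC.isComponent.reaches_of_mem_closureSet hB hv hv₀).pos_of_mulVec_le hB hx0
      hx.mulVec_eq.le hxv₀
  have hs : 0 < ∑ v, x v := sum_pos' (fun v _ => hx0 v) ⟨v₀, mem_univ v₀, hxv₀⟩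
  have hφ : IsHarmonic B ((∑ v, x v)⁻¹ • x) := congrFun <|
    (Matrix.mulVec_smul B _ x).trans (congrArg _ hx.mulVec_eq)
  refine ⟨(∑ v, x v)⁻¹ • x, fun v => smul_nonneg (inv_nonneg.2 hs.le) (hx0 v), ?_, hφ,
    fun v hv => ?_, fun v => ⟨fun h => ?_, fun h => (smul_pos (inv_pos.2 hs) (hx_pos v h)).ne'⟩⟩
  · simp only [Pi.smul_apply, smul_eq_mul, ← mul_sum, inv_mul_cancel₀ hs.ne']
  · rw [← hφ v]
    refine sum_congr rfl fun w _ => Set.indicator_apply_eq_self.2 fun hw => ?_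
    by_cases hwcl : w ∈ closureSet B C
    · rw [hC.isComponent.apply_eq_zero hB hv ⟨hwcl, hw⟩, zero_mul]
    · simp [hx_off w hwcl]
  · by_contra hv
    exact h (by simp [hx_off v hv])

theorem IsHarmonicComponent.isPhiC_phiComp (hB : ∀ v w, 0 ≤ B v w)
    (hC : IsHarmonicComponent B C) : IsPhiC B C (phiComp B C) := by
  have h := hC.exists_isPhiC hB
  rw [phiComp, dif_pos h]
  exact h.choose_spec

theorem IsPhiC.nonneg {φ : V → ℝ} (hφ : IsPhiC B C φ) : 0 ≤ φ := hφ.1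

theorem IsPhiC.sum_eq_one {φ : V → ℝ} (hφ : IsPhiC B C φ) : ∑ v, φ v = 1 := hφ.2.1

theorem IsPhiC.isHarmonic {φ : V → ℝ} (hφ : IsPhiC B C φ) : IsHarmonic B φ := hφ.2.2.1

theorem IsPhiC.sum_indicator_eq {φ : V → ℝ} (hφ : IsPhiC B C φ) (hv : v ∈ C) :
    ∑ w, C.indicator (fun w => B v w * φ w) w = φ v :=
  hφ.2.2.2.1 v hv

theorem IsPhiC.pos_iff {φ : V → ℝ} (hφ : IsPhiC B C φ) : 0 < φ v ↔ v ∈ closureSet B C :=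
  (hφ.nonneg v).lt_iff_ne'.trans (hφ.2.2.2.2 v)

theorem IsPhiC.eq_zero_of_notMem {φ : V → ℝ} (hφ : IsPhiC B C φ) (hv : v ∉ closureSet B C) :
    φ v = 0 :=
  not_not.1 ((hφ.2.2.2.2 v).not.2 hv)

theorem IsPhiC.indicator_le_mulVec {φ : V → ℝ} (hB : ∀ v w, 0 ≤ B v w) (hφ : IsPhiC B C φ) :
    C.indicator φ ≤ B *ᵥ C.indicator φ := fun v => by
  by_cases hv : v ∈ C
  · calc C.indicator φ v = ∑ w, C.indicator (fun w => B v w * φ w) w := by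
          rw [Set.indicator_of_mem hv, hφ.sum_indicator_eq hv]
      _ ≤ ∑ w, B v w * C.indicator φ w := by simp only [Set.indicator_mul_right, le_rfl]
  · rw [Set.indicator_of_notMem hv]
    exact mulVec_nonneg hB (Set.indicator_nonneg fun u _ => hφ.nonneg u) v

theorem IsHarmonicComponent.eq_of_mem_closureSet (hB : ∀ v w, 0 ≤ B v w)
    (hC : IsHarmonicComponent B C) (hC' : IsHarmonicComponent B C') (hv : v ∈ C')
    (hvC : v ∈ closureSet B C) : C' = C := by
  have hφ := hC.isPhiC_phiComp hB
  have hφ' := hC'.isPhiC_phiComp hB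
  have hfφ : ∀ u, phiComp B C u = 0 → C'.indicator (phiComp B C') u = 0 := fun u hu =>
    Set.indicator_of_notMem (fun huC' => (hφ.pos_iff.2
      ((hC'.isComponent.reaches_of_mem_closureSet hB (subset_closureSet B C' huC')
        hv).mem_closureSet hB hvC)).ne' hu) _
  have hfv : 0 < C'.indicator (phiComp B C') v :=
    (hφ'.pos_iff.2 (subset_closureSet B C' hv)).trans_eq (Set.indicator_of_mem hv _).symm
  obtain ⟨K, hK, m, hm, hfK⟩ :=
    exists_eq_mul_of_le_mulVec hB hφ.nonneg hφ.isHarmonic.mulVec_eq.le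
      (hφ'.indicator_le_mulVec hB) hfφ hfv
  obtain ⟨u, hu, hmu⟩ := hφ.pos_iff.1 hm
  have hfu : 0 < C'.indicator (phiComp B C') u :=
    (mul_pos hK (hφ.pos_iff.2 (subset_closureSet B C hu))).trans_eq (hfK u hmu).symm
  have hu' : u ∈ C' := Set.mem_of_indicator_ne_zero hfu.ne'
  rw [hC'.isComponent.eq_reachClass hB hu', hC.isComponent.eq_reachClass hB hu]

theorem IsHarmonicComponent.exists_eq_mul_phiComp (hB : ∀ v w, 0 ≤ B v w)
    (hC : IsHarmonicComponent B C) (h0 : 0 ≤ ψ) (hψ : B *ᵥ ψ ≤ ψ) (hpos : ∀ v ∈ C, 0 < ψ v) :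
    ∃ t > 0, ∀ v ∈ C, ψ v = t * phiComp B C v := by
  have hφ := hC.isPhiC_phiComp hB
  have hφψ : ∀ u, ψ u = 0 → phiComp B C u = 0 := fun u hu =>
    hφ.eq_zero_of_notMem fun h => (pos_of_mem_closureSet hB h0 hψ hpos h).ne' hu
  obtain ⟨v, hv⟩ := hC.isComponent.nonempty
  obtain ⟨K, hK, m, hm, hφK⟩ := exists_eq_mul_of_le_mulVec hB h0 hψ hφ.isHarmonic.mulVec_eq.ge hφψ
    (hφ.pos_iff.2 (subset_closureSet B C hv))
  have hm_cl : m ∈ closureSet B C := hφ.pos_iff.1 <| by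
    rw [hφK m (.refl B m)]
    exact mul_pos hK hm
  refine ⟨K⁻¹, inv_pos.2 hK, fun w hw => ?_⟩
  rw [hφK w (hC.isComponent.reaches_of_mem_closureSet hB hm_cl hw), inv_mul_cancel_left₀ hK.ne']

end HarmonicComponent

section Terminal

variable [DecidableEq V] {B : Matrix V V ℝ} {ψ χ : V → ℝ} {v w : V}

theorem IsTerminal.pos_of_mem_reachClass (hB : ∀ v w, 0 ≤ B v w) (h0 : 0 ≤ ψ) (hψ : B *ᵥ ψ ≤ ψ)
    (hw : IsTerminal B ψ w) (hv : v ∈ reachClass B w) : 0 < ψ v :=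
  hv.2.pos_of_mulVec_le hB h0 hψ hw.1

theorem IsTerminal.isHarmonicComponent (hB : ∀ v w, 0 ≤ B v w) (h0 : 0 ≤ ψ)
    (hψ : IsHarmonic B ψ) (hw : IsTerminal B ψ w) : IsHarmonicComponent B (reachClass B w) := by
  have hpos : ∀ v ∈ reachClass B w, 0 < ψ v :=
    fun v => hw.pos_of_mem_reachClass hB h0 hψ.mulVec_eq.le
  have hmem : ∀ {u v}, u ∈ reachClass B w → 0 < ψ v → B u v ≠ 0 → v ∈ reachClass B w :=
    fun {u v} hu hv huv =>
      have hwv := hu.1.trans hB (.of_pos ((hB u v).lt_of_ne' huv))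
      ⟨hwv, hw.2 v hv hwv⟩
  refine ⟨⟨⟨w, rfl⟩, w, self_mem_reachClass B w, ?_⟩, ?_,
    fun _ => specRadOn_closureSet_diff_lt_one hB h0 hψ.mulVec_eq.le hpos⟩
  · obtain ⟨u, -, hu⟩ := exists_ne_zero_of_sum_ne_zero ((hψ w).trans_ne hw.1.ne')
    exact ⟨u, hmem (self_mem_reachClass B w) ((h0 u).lt_of_ne' (right_ne_zero_of_mul hu))
      (left_ne_zero_of_mul hu), left_ne_zero_of_mul hu⟩
  · refine specRadOn_eq_one_of_mulVec_eq hB ⟨w, self_mem_reachClass B w⟩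
      (y := (reachClass B w).indicator ψ)
      (fun v hv => (hpos v hv).trans_eq (Set.indicator_of_mem hv ψ).symm)
      (fun v hv => Set.indicator_of_notMem hv ψ) fun v hv => ?_
    rw [Set.indicator_of_mem hv, ← hψ v]
    refine mulVec_apply_congr fun u hvu => Set.indicator_apply_eq_self.2 fun hu => ?_
    by_contra hne
    exact hu (hmem hv ((h0 u).lt_of_ne' hne) hvu)

theorem IsHarmonic.eq_of_eq_on_isTerminal (hB : ∀ v w, 0 ≤ B v w) (h0 : 0 ≤ ψ)
    (hψ : IsHarmonic B ψ) (hχ : IsHarmonic B χ) (hsupp : ∀ v, ψ v = 0 → χ v = 0)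
    (h : ∀ w, IsTerminal B ψ w → χ w = ψ w) : χ = ψ := by
  by_contra! hne
  obtain ⟨v, hv⟩ := Function.ne_iff.1 hne
  have hsub : |χ - ψ| ≤ B *ᵥ |χ - ψ| := fun u =>
    calc |χ u - ψ u| = |∑ w, B u w * (χ w - ψ w)| := by
          simp only [mul_sub, sum_sub_distrib, hχ u, hψ u]
      _ ≤ ∑ w, |B u w * (χ w - ψ w)| := abs_sum_le_sum_abs _ _
      _ = ∑ w, B u w * |χ w - ψ w| := by simp only [abs_mul, abs_of_nonneg (hB u _)]
  obtain ⟨K, hK, m, hm, heq⟩ := exists_eq_mul_of_le_mulVec hB h0 hψ.mulVec_eq.le hsub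
    (fun u hu => by simp [hu, hsupp u hu]) (abs_pos.2 (sub_ne_zero.2 hv))
  obtain ⟨w, hw, hmw⟩ := exists_isTerminal_reaches hB hm
  have hzero : K * ψ w = 0 := by simp [← heq w hmw, h w hw]
  exact (mul_pos hK hw.1).ne' hzero

end Terminal

section Decomposition

variable [DecidableEq V] {B : Matrix V V ℝ} {P Q : Finset (Set V)} {t s : Set V → ℝ}
  {C : Set V} {ψ : V → ℝ} {v : V}

theorem sum_mul_phiComp_apply (hB : ∀ v w, 0 ≤ B v w) (hP : ∀ C ∈ P, IsHarmonicComponent B C)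
    (ht : ∀ C ∉ P, t C = 0) (hC : IsHarmonicComponent B C) (hv : v ∈ C) :
    ∑ C' ∈ P, t C' * phiComp B C' v = t C * phiComp B C v := by
  refine sum_eq_single C (fun C' hC' hne => ?_) fun hCP => by rw [ht C hCP, zero_mul]
  have hv' : v ∉ closureSet B C' := fun h =>
    hne ((hP C' hC').eq_of_mem_closureSet hB hC hv h).symm
  rw [((hP C' hC').isPhiC_phiComp hB).eq_zero_of_notMem hv', mul_zero]

theorem coeff_eq_of_sum_mul_phiComp_eq (hB : ∀ v w, 0 ≤ B v w)
    (hP : ∀ C ∈ P, IsHarmonicComponent B C) (ht : ∀ C ∉ P, t C = 0)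
    (hQ : ∀ C ∈ Q, IsHarmonicComponent B C) (hs : ∀ C ∉ Q, s C = 0)
    (h : ∀ v, ∑ C ∈ P, t C * phiComp B C v = ∑ C ∈ Q, s C * phiComp B C v) : t = s := by
  ext C
  by_cases hC : IsHarmonicComponent B C
  · obtain ⟨v, hv⟩ := hC.isComponent.nonempty
    have hφv := (hC.isPhiC_phiComp hB).pos_iff.2 (subset_closureSet B C hv)
    refine mul_right_cancel₀ hφv.ne' ?_
    rw [← sum_mul_phiComp_apply hB hP ht hC hv, h v, sum_mul_phiComp_apply hB hQ hs hC hv]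
  · rw [ht C fun h => hC (hP C h), hs C fun h => hC (hQ C h)]

theorem sum_sum_mul_phiComp (hB : ∀ v w, 0 ≤ B v w) (hP : ∀ C ∈ P, IsHarmonicComponent B C)
    (t : Set V → ℝ) : ∑ v, ∑ C ∈ P, t C * phiComp B C v = ∑ C ∈ P, t C := by
  rw [sum_comm]
  refine sum_congr rfl fun C hC => ?_
  rw [← mul_sum, ((hP C hC).isPhiC_phiComp hB).sum_eq_one, mul_one]

theorem IsHarmonic.exists_eq_sum_mul_phiComp (hB : ∀ v w, 0 ≤ B v w) (h0 : 0 ≤ ψ)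
    (hψ : IsHarmonic B ψ) :
    ∃ (P : Finset (Set V)) (t : Set V → ℝ), (∀ C ∈ P, IsHarmonicComponent B C) ∧
      (∀ C ∈ P, 0 < t C) ∧ (∀ C ∉ P, t C = 0) ∧ ∀ v, ψ v = ∑ C ∈ P, t C * phiComp B C v := by
  classical
  let P : Finset (Set V) := ({w | IsTerminal B ψ w} : Finset V).image (reachClass B)
  have hP : ∀ C ∈ P, ∃ w, IsTerminal B ψ w ∧ reachClass B w = C := by simp [P]
  have hharm : ∀ C ∈ P, IsHarmonicComponent B C := fun C hC => by
    obtain ⟨w, hw, rfl⟩ := hP C hC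
    exact hw.isHarmonicComponent hB h0 hψ
  have hpos : ∀ C ∈ P, ∀ v ∈ C, 0 < ψ v := fun C hC => by
    obtain ⟨w, hw, rfl⟩ := hP C hC
    exact fun v => hw.pos_of_mem_reachClass hB h0 hψ.mulVec_eq.le
  choose! t ht htψ using fun C hC =>
    (hharm C hC).exists_eq_mul_phiComp hB h0 hψ.mulVec_eq.le (hpos C hC)
  let t' : Set V → ℝ := (P : Set (Set V)).indicator t
  have ht'_mem : ∀ C ∈ P, t' C = t C := fun C hC => Set.indicator_of_mem hC t
  have ht'_off : ∀ C ∉ P, t' C = 0 := fun C hC => Set.indicator_of_notMem hC t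
  have hχ : IsHarmonic B fun v => ∑ C ∈ P, t' C * phiComp B C v :=
    .sum_mul t' fun C hC => ((hharm C hC).isPhiC_phiComp hB).isHarmonic
  have hχ_supp : ∀ v, ψ v = 0 → ∑ C ∈ P, t' C * phiComp B C v = 0 := fun v hv =>
    sum_eq_zero fun C hC => mul_eq_zero_of_right _ <|
      ((hharm C hC).isPhiC_phiComp hB).eq_zero_of_notMem fun h =>
        (pos_of_mem_closureSet hB h0 hψ.mulVec_eq.le (hpos C hC) h).ne' hv
  have hχ_terminal : ∀ w, IsTerminal B ψ w → ∑ C ∈ P, t' C * phiComp B C w = ψ w := fun w hw => by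
    have hwP : reachClass B w ∈ P := mem_image_of_mem _ (by simpa using hw)
    rw [sum_mul_phiComp_apply hB hharm ht'_off (hharm _ hwP) (self_mem_reachClass B w),
      ht'_mem _ hwP, htψ _ hwP w (self_mem_reachClass B w)]
  exact ⟨P, t', hharm, fun C hC => (ht C hC).trans_eq (ht'_mem C hC).symm, ht'_off,
    fun v => (congrFun (hψ.eq_of_eq_on_isTerminal hB h0 hχ hχ_supp hχ_terminal) v).symm⟩

end Decomposition

theorem harmonic_decomposition_general {V : Type*} [Fintype V] [DecidableEq V]
    (B : Matrix V V ℝ) (hB : ∀ v w, 0 ≤ B v w) (ψ : V → ℝ) (hψ : ∀ v, 0 ≤ ψ v)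
    (hharm : IsHarmonic B ψ) :
    ∃! p : Finset (Set V) × (Set V → ℝ),
      (∀ C ∈ p.1, IsHarmonicComponent B C) ∧
      (∀ C ∈ p.1, 0 < p.2 C ∧ p.2 C ≤ ∑ v, ψ v) ∧
      (∀ C, C ∉ p.1 → p.2 C = 0) ∧
      (∀ v, ψ v = ∑ C ∈ p.1, p.2 C * phiComp B C v) := by
  obtain ⟨P, t, hP, ht, ht_off, hrep⟩ := hharm.exists_eq_sum_mul_phiComp hB hψ
  have ht_le : ∀ C ∈ P, t C ≤ ∑ v, ψ v := fun C hC => by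
    simp only [hrep, sum_sum_mul_phiComp hB hP t]
    exact single_le_sum (fun C hC => (ht C hC).le) hC
  refine ⟨(P, t), ⟨hP, fun C hC => ⟨ht C hC, ht_le C hC⟩, ht_off, hrep⟩, ?_⟩
  rintro ⟨Q, s⟩ ⟨hQ, hs, hs_off, hrep'⟩
  obtain rfl : s = t := coeff_eq_of_sum_mul_phiComp_eq hB hQ hs_off hP ht_off fun v =>
    (hrep' v).symm.trans (hrep v)
  have hQP : Q = P := Finset.ext fun C =>
    ⟨fun hC => by_contra fun h => (hs C hC).1.ne' (ht_off C h),
      fun hC => by_contra fun h => (ht C hC).ne' (hs_off C h)⟩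
  rw [hQP]

/-- Frobenius-Victory: every normalized `B`-harmonic vector `ψ ∈ [0,1]^V` is uniquely a
combination `ψ = Σ_{C ∈ 𝒞} t_C φ^C` over a collection `𝒞` of `B`-harmonic components,
with `t_C ∈ (0,1]`. -/
theorem harmonic_decomposition {V : Type*} [Fintype V] [Nonempty V] [DecidableEq V]
    (B : Matrix V V ℝ) (hB : ∀ v w, 0 ≤ B v w)
    (ψ : V → ℝ) (hψ : ∀ v, 0 ≤ ψ v ∧ ψ v ≤ 1) (hnorm : ∑ v, ψ v = 1)
    (hharm : IsHarmonic B ψ) :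
    ∃! p : Finset (Set V) × (Set V → ℝ),
      (∀ C ∈ p.1, IsHarmonicComponent B C) ∧
      (∀ C ∈ p.1, 0 < p.2 C ∧ p.2 C ≤ 1) ∧
      (∀ C, C ∉ p.1 → p.2 C = 0) ∧
      (∀ v, ψ v = ∑ C ∈ p.1, p.2 C * phiComp B C v) := by
  simpa only [hnorm] using
    harmonic_decomposition_general B hB ψ (fun v => (hψ v).1) hharm
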